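/- Let G = (V,E) be a finite simple connected graph with minimum degree at least 2 and |V| ≥ 4, and suppose G has a 2-edge-connected spanning subgraph. Then every 2-edge-connected spanning subgraph H of G satisfies |E(H)| ≥ 2|V| − ν, where ν is the maximum size of a triangle-free 2-matching of G. -/

import Mathlib

namespace ECSS

variable {V : Type*}

/-- The spanning subgraph of the vertex type `V` determined by an edge set `F`,
viewed as a simple graph on `V`. -/
def graphOf (F : Finset (Sym2 V)) : SimpleGraph V :=
  SimpleGraph.fromEdgeSet (F : Set (Sym2 V))

/-- `d_F(v)`: the number of edges of the edge set `F` incident to the vertex `v`. -/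
noncomputable def degIn (F : Finset (Sym2 V)) (v : V) : ℕ :=
  {e ∈ (F : Set (Sym2 V)) | v ∈ e}.ncard

/-- `F` is a 2-matching: every vertex is incident to at most 2 edges of `F`. -/
def IsTwoMatching (F : Finset (Sym2 V)) : Prop :=
  ∀ v : V, degIn F v ≤ 2

/-- `F` is a 2-edge-cover: every vertex is incident to at least 2 edges of `F`. -/
def IsTwoEdgeCover (F : Finset (Sym2 V)) : Prop :=
  ∀ v : V, 2 ≤ degIn F v

/-- The vertices `u, v, w` form a triangle 2EC component of the edge set `F`:
they are pairwise distinct, the three edges joining them all belong to `F`, and no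
other edge of `F` is incident to any of them (so `{u, v, w}` is a connected
component of `(V, F)` which is a cycle of length 3). -/
def IsTriangleComponent (F : Finset (Sym2 V)) (u v w : V) : Prop :=
  u ≠ v ∧ u ≠ w ∧ v ≠ w ∧
  s(u, v) ∈ F ∧ s(u, w) ∈ F ∧ s(v, w) ∈ F ∧
  ∀ e ∈ F, (u ∈ e ∨ v ∈ e ∨ w ∈ e) → e = s(u, v) ∨ e = s(u, w) ∨ e = s(v, w)

/-- An edge set `F` is triangle-free if it has no triangle 2EC component. -/
def TriangleFree (F : Finset (Sym2 V)) : Prop :=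
  ¬ ∃ u v w : V, IsTriangleComponent F u v w

/-- A graph is 2-edge-connected if it has at least two vertices and remains
connected after deleting any single edge. -/
def TwoEdgeConnected {α : Type*} (G : SimpleGraph α) : Prop :=
  2 ≤ Nat.card α ∧ G.Connected ∧ ∀ e ∈ G.edgeSet, (G.deleteEdges {e}).Connected

/-- A graph is a cycle if it is connected and every vertex has degree exactly 2. -/
def IsCycleGraph {α : Type*} (G : SimpleGraph α) : Prop :=
  G.Connected ∧ ∀ v : α, (G.neighborSet v).ncard = 2

theorem tc_rot {F : Finset (Sym2 V)} {u v w : V} (h : IsTriangleComponent F u v w) :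
    IsTriangleComponent F v w u := by
  obtain ⟨h1, h2, h3, h4, h5, h6, h7⟩ := h
  refine ⟨h3, h1.symm, h2.symm, h6, by rwa [Sym2.eq_swap], by rwa [Sym2.eq_swap], ?_⟩
  intro e he h
  have := h7 e he (by tauto)
  rw [Sym2.eq_swap (a := v) (b := u), Sym2.eq_swap (a := w) (b := u)]
  tauto

/-- A triangle component that meets `a` can be listed starting from `a`. -/
theorem tc_first {F : Finset (Sym2 V)} {u v w : V} (h : IsTriangleComponent F u v w)
    (a : V) (ha : a = u ∨ a = v ∨ a = w) : ∃ q r, IsTriangleComponent F a q r := by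
  rcases ha with rfl | rfl | rfl
  · exact ⟨_, _, h⟩
  · exact ⟨_, _, tc_rot h⟩
  · exact ⟨_, _, tc_rot (tc_rot h)⟩

open Classical in
theorem degIn_eq (F : Finset (Sym2 V)) (v : V) :
    degIn F v = (F.filter (fun e => v ∈ e)).card := by
  unfold degIn
  rw [← Set.ncard_coe_finset]
  congr 1
  ext e
  simp

open Classical in
theorem degIn_erase {F : Finset (Sym2 V)} {e : Sym2 V} (he : e ∈ F) (v : V) (hv : v ∈ e) :
    degIn (F.erase e) v + 1 = degIn F v := by
  rw [degIn_eq, degIn_eq, Finset.filter_erase]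
  exact Finset.card_erase_add_one (by simp [he, hv])

open Classical in
theorem degIn_erase_le {F : Finset (Sym2 V)} {e : Sym2 V} (v : V) :
    degIn (F.erase e) v ≤ degIn F v := by
  rw [degIn_eq, degIn_eq]
  exact Finset.card_le_card (Finset.filter_subset_filter _ (Finset.erase_subset _ _))

open Classical in
/-- If an edge set is new-triangle-creating after erasing `s(a, x)`, erase `s(a, b)` instead. -/
theorem erase_other {F : Finset (Sym2 V)} (hF : TriangleFree F) {a b c x : V}
    (hT : IsTriangleComponent (F.erase s(a, x)) a b c) :
    TriangleFree (F.erase s(a, b)) := by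
  obtain ⟨hab, hac, hbc, h1, h2, h3, h4⟩ := hT
  rw [Finset.mem_erase] at h1 h2 h3
  have hxb : x ≠ b := fun h => h1.1 (by rw [h])
  have hxc : x ≠ c := fun h => h2.1 (by rw [h])
  have key : ∀ e ∈ F, (a ∈ e ∨ b ∈ e ∨ c ∈ e) →
      e = s(a, x) ∨ e = s(a, b) ∨ e = s(a, c) ∨ e = s(b, c) := by
    intro e he h
    by_cases hex : e = s(a, x)
    · exact Or.inl hex
    · exact Or.inr (h4 e (Finset.mem_erase.2 ⟨hex, he⟩) h)
  rintro ⟨p, q, r, hpqr⟩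
  by_cases hb : b = p ∨ b = q ∨ b = r
  · obtain ⟨q', r', g1, g2, g3, g4, g5, g6, g7⟩ := tc_first hpqr b hb
    rw [Finset.mem_erase] at g4 g5
    have k1 := key _ g4.2 (by simp)
    have k2 := key _ g5.2 (by simp)
    have e1 := g4.1
    have e2 := g5.1
    simp only [Sym2.eq_iff, ne_eq] at *
    grind
  by_cases ha : a = p ∨ a = q ∨ a = r
  · obtain ⟨q', r', g1, g2, g3, g4, g5, g6, g7⟩ := tc_first hpqr a ha
    rw [Finset.mem_erase] at g4 g5 g6
    have k1 := key _ g4.2 (by simp)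
    have k2 := key _ g5.2 (by simp)
    have k3 := key _ g6.2
    have e1 := g4.1
    have e2 := g5.1
    simp only [Sym2.eq_iff, Sym2.mem_iff, ne_eq] at *
    grind
  · apply hF
    obtain ⟨g1, g2, g3, g4, g5, g6, g7⟩ := hpqr
    refine ⟨p, q, r, g1, g2, g3, Finset.mem_of_mem_erase g4, Finset.mem_of_mem_erase g5,
      Finset.mem_of_mem_erase g6, ?_⟩
    intro e he h
    apply g7 e _ h
    refine Finset.mem_erase.2 ⟨?_, he⟩
    rintro rfl
    simp only [Sym2.mem_iff] at h
    grind

open Classical in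
theorem step {F : Finset (Sym2 V)} (hF : TriangleFree F)
    {v : V} (hv : 3 ≤ degIn F v) :
    ∃ e ∈ F, ∃ u ∈ e, 3 ≤ degIn F u ∧ TriangleFree (F.erase e) := by
  have hne : (F.filter (fun e => v ∈ e)).Nonempty := by
    rw [← Finset.card_pos, ← degIn_eq]; omega
  obtain ⟨e, he⟩ := hne
  rw [Finset.mem_filter] at he
  obtain ⟨heF, hve⟩ := he
  by_cases hT : TriangleFree (F.erase e)
  · exact ⟨e, heF, v, hve, hv, hT⟩
  unfold TriangleFree at hT
  push Not at hT
  obtain ⟨p, q, r, hpqr⟩ := hT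
  have hmeet : p ∈ e ∨ q ∈ e ∨ r ∈ e := by
    by_contra hcon
    apply hF
    obtain ⟨g1, g2, g3, g4, g5, g6, g7⟩ := hpqr
    refine ⟨p, q, r, g1, g2, g3, Finset.mem_of_mem_erase g4, Finset.mem_of_mem_erase g5,
      Finset.mem_of_mem_erase g6, ?_⟩
    intro e' he' h
    apply g7 e' _ h
    refine Finset.mem_erase.2 ⟨?_, he'⟩
    rintro rfl
    exact hcon h
  obtain ⟨a, b, c, hae, hT⟩ : ∃ a b c, a ∈ e ∧ IsTriangleComponent (F.erase e) a b c := by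
    rcases hmeet with h | h | h
    · exact ⟨_, _, _, h, hpqr⟩
    · exact ⟨_, _, _, h, tc_rot hpqr⟩
    · exact ⟨_, _, _, h, tc_rot (tc_rot hpqr)⟩
  obtain ⟨x, rfl⟩ := hae
  refine ⟨s(a, b), Finset.mem_of_mem_erase hT.2.2.2.1, a, by simp, ?_, erase_other hF hT⟩
  rw [← degIn_erase heF a (by simp)]
  have : 2 ≤ degIn (F.erase s(a, x)) a := by
    rw [degIn_eq]
    have hsub : ({s(a, b), s(a, c)} : Finset (Sym2 V)) ⊆
        (F.erase s(a, x)).filter (fun e => a ∈ e) := by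
      intro e he
      simp only [Finset.mem_insert, Finset.mem_singleton] at he
      rcases he with rfl | rfl
      · exact Finset.mem_filter.2 ⟨hT.2.2.2.1, by simp⟩
      · exact Finset.mem_filter.2 ⟨hT.2.2.2.2.1, by simp⟩
    have hc := Finset.card_le_card hsub
    rwa [Finset.card_pair] at hc
    intro h
    rw [Sym2.eq_iff] at h
    have := hT.1; have := hT.2.2.1
    grind
  omega

open Classical in
theorem exists_matching [Fintype V] (n : ℕ) : ∀ F : Finset (Sym2 V), F.card = n →
    TriangleFree F → ∃ M ⊆ F, IsTwoMatching M ∧ TriangleFree M ∧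
      F.card ≤ M.card + ∑ v, (degIn F v - 2) := by
  induction n with
  | zero =>
    intro F hc hF
    refine ⟨F, subset_rfl, ?_, hF, by omega⟩
    intro v
    rw [Finset.card_eq_zero] at hc
    subst hc
    simp [degIn_eq]
  | succ n ih =>
    intro F hc hF
    by_cases h2 : IsTwoMatching F
    · exact ⟨F, subset_rfl, h2, hF, by omega⟩
    unfold IsTwoMatching at h2
    push Not at h2
    obtain ⟨v, hv⟩ := h2
    obtain ⟨e, he, u, hu, hdu, hT⟩ := step hF (v := v) hv
    obtain ⟨M, hM, hM2, hMT, hcard⟩ := ih (F.erase e) (by rw [Finset.card_erase_of_mem he]; omega) hT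
    refine ⟨M, hM.trans (Finset.erase_subset _ _), hM2, hMT, ?_⟩
    have hlt : ∑ v, (degIn (F.erase e) v - 2) < ∑ v, (degIn F v - 2) := by
      apply Finset.sum_lt_sum
      · intro i _
        have := degIn_erase_le (F := F) (e := e) i
        omega
      · refine ⟨u, Finset.mem_univ _, ?_⟩
        have := degIn_erase he u hu
        omega
    have := Finset.card_erase_add_one he
    omega

open Classical in
theorem handshake [Fintype V] (F : Finset (Sym2 V)) (hF : ∀ e ∈ F, ¬ e.IsDiag) :
    ∑ v, degIn F v = 2 * F.card := by
  simp only [degIn_eq, Finset.card_filter]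
  rw [Finset.sum_comm, mul_comm, ← smul_eq_mul, ← Finset.sum_const]
  apply Finset.sum_congr rfl
  intro e he
  have hd := hF e he
  rw [← Finset.card_filter]
  induction e using Sym2.ind with
  | _ x y =>
    have hxy : x ≠ y := by simpa using hd
    rw [← Finset.card_pair hxy]
    congr 1
    ext z
    simp

theorem conn_closed {G : SimpleGraph V} (hG : G.Connected) (S : Set V)
    (hS : ∀ a ∈ S, ∀ b, G.Adj a b → b ∈ S) {u : V} (hu : u ∈ S) (x : V) : x ∈ S := by
  obtain ⟨p⟩ := hG.preconnected u x
  induction p with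
  | nil => exact hu
  | cons h _ ih => exact ih (hS _ hu _ h)

open Classical in
theorem two_le_degIn [Fintype V] {H : Finset (Sym2 V)}
    (hV : 4 ≤ Fintype.card V) (hH : TwoEdgeConnected (graphOf H)) (v : V) : 2 ≤ degIn H v := by
  obtain ⟨-, hc, hd⟩ := hH
  obtain ⟨y, hy⟩ : ∃ y, y ≠ v := by
    haveI : Nontrivial V := Fintype.one_lt_card_iff_nontrivial.1 (by omega)
    exact exists_ne v
  have nb : ∀ G : SimpleGraph V, G.Connected → ∃ b, G.Adj v b := by
    intro G hG
    by_contra hcon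
    push Not at hcon
    apply hy
    have := conn_closed hG {v} (by rintro a rfl b hab; exact absurd hab (hcon b)) rfl y
    simpa using this
  obtain ⟨b, hb⟩ := nb _ hc
  obtain ⟨c, hcc⟩ := nb _ (hd s(v, b) hb)
  rw [SimpleGraph.deleteEdges_adj] at hcc
  obtain ⟨hc1, hc2⟩ := hcc
  simp only [graphOf, SimpleGraph.fromEdgeSet_adj, Finset.mem_coe] at hb hc1
  rw [degIn_eq]
  have hsub : ({s(v, c), s(v, b)} : Finset (Sym2 V)) ⊆ H.filter (fun e => v ∈ e) := by
    intro e he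
    simp only [Finset.mem_insert, Finset.mem_singleton] at he
    rcases he with rfl | rfl
    · exact Finset.mem_filter.2 ⟨hc1.1, by simp⟩
    · exact Finset.mem_filter.2 ⟨hb.1, by simp⟩
  have := Finset.card_le_card hsub
  rwa [Finset.card_pair (by simpa using hc2)] at this

open Classical in
theorem triangleFree_of_conn [Fintype V] {H : Finset (Sym2 V)}
    (hV : 4 ≤ Fintype.card V) (hH : (graphOf H).Connected) : TriangleFree H := by
  rintro ⟨u, v, w, h1, h2, h3, h4, h5, h6, h7⟩
  have hall : ∀ x, x ∈ ({u, v, w} : Set V) := by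
    apply conn_closed hH _ _ (u := u) (by simp)
    intro a ha b hab
    simp only [graphOf, SimpleGraph.fromEdgeSet_adj, Finset.mem_coe] at hab
    have := h7 _ hab.1
    simp only [Set.mem_insert_iff, Set.mem_singleton_iff, Sym2.mem_iff, Sym2.eq_iff] at *
    grind
  have hsub : (Finset.univ : Finset V) ⊆ {u, v, w} := by
    intro x _
    simpa using hall x
  have := Finset.card_le_card hsub
  have h3 := Finset.card_le_three (a := u) (b := v) (c := w)
  rw [Finset.card_univ] at this
  omega

/-- Let `G` be a finite simple connected graph with minimum
degree at least 2 and `|V| ≥ 4`, having a 2-edge-connected spanning subgraph.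
Then every 2-edge-connected spanning subgraph `H` of `G` satisfies
`|E(H)| ≥ 2|V| - ν`, where `ν` is the maximum size of a triangle-free
2-matching of `G`. -/
theorem twoECSS_lower_bound
    {V : Type*} [Fintype V] (G : SimpleGraph V)
    (hconn : G.Connected)
    (hmin : ∀ v : V, 2 ≤ (G.neighborSet v).ncard)
    (hV : 4 ≤ Fintype.card V)
    (hex : ∃ S : Finset (Sym2 V), (S : Set (Sym2 V)) ⊆ G.edgeSet ∧
      TwoEdgeConnected (graphOf S))
    (ν : ℕ)
    (hν : IsGreatest {n : ℕ | ∃ M : Finset (Sym2 V), (M : Set (Sym2 V)) ⊆ G.edgeSet ∧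
      IsTwoMatching M ∧ TriangleFree M ∧ M.card = n} ν) :
    ∀ H : Finset (Sym2 V), (H : Set (Sym2 V)) ⊆ G.edgeSet →
      TwoEdgeConnected (graphOf H) →
      2 * Fintype.card V - ν ≤ H.card := by
  intro H hHG hH
  obtain ⟨M, hMH, hM2, hMT, hcard⟩ :=
    exists_matching H.card H rfl (triangleFree_of_conn hV hH.2.1)
  have hle : M.card ≤ ν := hν.2 ⟨M, fun e he => hHG (hMH he), hM2, hMT, rfl⟩
  have hs := handshake H (fun e he => G.not_isDiag_of_mem_edgeSet (hHG he))
  have h2 : ∑ v, (degIn H v - 2) + 2 * Fintype.card V = ∑ v, degIn H v := by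
    have : 2 * Fintype.card V = ∑ _v : V, 2 := by simp [mul_comm]
    rw [this, ← Finset.sum_add_distrib]
    apply Finset.sum_congr rfl
    intro v _
    have := two_le_degIn hV hH v
    omega
  omega

end ECSS
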